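/- arXiv:math/0602526 — 4 statements merged into one kernel-verified Lean document; each statement's English description precedes it below -/
import Mathlib

section
/- Under the heavy traffic condition, the system cannot process arrivals at rates strictly greater than λ: if ξ ∈ ℝ^{I×J} satisfies ξ_{ij} ≥ 0 for all i,j and Σ_{i∈ℐ} ξ_{ij} ≤ 1 for all j ∈ 𝒥, and λ̃ ∈ ℝ^I satisfies λ̃_i ≥ λ_i for all i ∈ ℐ and Σ_{j∈𝒥} μ̄_{ij} ξ_{ij} = λ̃_i for all i ∈ ℐ, then λ̃ = λ. -/
/-!
If `ξ` processes rates `lamT ≥ lam` within unit capacity, multiply each row `i` by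
`lam i / lamT i ≤ 1`. The result is feasible for the linear program at `ρ = 1`, which is the
optimal value, so by uniqueness it equals `ξstar` and all its column sums are `1`. As it lies
entrywise below `ξ`, whose column sums are at most `1`, it coincides with `ξ`; hence `lamT = lam`.
-/

open Finset

/-- Feasibility for the static linear program: `ξ` satisfies the arrival-rate
equations `Σ_j μ̄_{ij} ξ_{ij} = λ_i` (with `μ̄_{ij} = ν_j μ_{ij}`), the capacity
constraints `Σ_i ξ_{ij} ≤ ρ`, and nonnegativity. -/
def LPFeasible {I J : ℕ} (lam : Fin I → ℝ) (nu : Fin J → ℝ) (mu : Fin I → Fin J → ℝ)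
    (ξ : Fin I → Fin J → ℝ) (ρ : ℝ) : Prop :=
  (∀ i, ∑ j, nu j * mu i j * ξ i j = lam i) ∧ (∀ j, ∑ i, ξ i j ≤ ρ) ∧ ∀ i j, 0 ≤ ξ i j

/-- under the heavy traffic condition, the system cannot process
arrivals at rates strictly greater than `λ`. -/
theorem stmt5 (I J : ℕ) (hI : 0 < I) (hJ : 0 < J) (E : Finset (Fin I × Fin J))
    (lam : Fin I → ℝ) (nu : Fin J → ℝ) (mu : Fin I → Fin J → ℝ)
    (hlam : ∀ i, 0 < lam i) (hnu : ∀ j, 0 < nu j)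
    (hmu : ∀ i j, 0 ≤ mu i j) (hmuE : ∀ i j, 0 < mu i j ↔ (i, j) ∈ E)
    (ξstar : Fin I → Fin J → ℝ) (ρstar : ℝ)
    -- the heavy traffic condition: `(ξ*, ρ*)` is the unique optimal solution ...
    (hfeas : LPFeasible lam nu mu ξstar ρstar)
    (hopt : ∀ ξ ρ, LPFeasible lam nu mu ξ ρ → ρstar ≤ ρ)
    (huniq : ∀ ξ ρ, LPFeasible lam nu mu ξ ρ →
      (∀ ξ' ρ', LPFeasible lam nu mu ξ' ρ' → ρ ≤ ρ') → ξ = ξstar ∧ ρ = ρstar)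
    -- ... and moreover `Σ_i ξ*_{ij} = 1` for all `j` (hence `ρ* = 1`)
    (hone : ∀ j, ∑ i, ξstar i j = 1)
    (ξ : Fin I → Fin J → ℝ) (lamT : Fin I → ℝ)
    (hξ0 : ∀ i j, 0 ≤ ξ i j) (hξ1 : ∀ j, ∑ i, ξ i j ≤ 1)
    (hge : ∀ i, lam i ≤ lamT i)
    (heq : ∀ i, ∑ j, nu j * mu i j * ξ i j = lamT i) :
    lamT = lam := by
  have hJ0 := hone ⟨0, hJ⟩
  have hρ : ρstar ≤ 1 := hopt ξstar 1 ⟨hfeas.1, fun j => (hone j).le, hfeas.2.2⟩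
  have hT : ∀ i, 0 < lamT i := fun i => (hlam i).trans_le (hge i)
  -- shrinking row `i` by `lam i / lamT i ≤ 1` restores the arrival rates `lam`
  have hle : ∀ i j, lam i / lamT i * ξ i j ≤ ξ i j := fun i j =>
    mul_le_of_le_one_left (hξ0 i j) ((div_le_one (hT i)).2 (hge i))
  have hrate : ∀ i, ∑ j, nu j * mu i j * (lam i / lamT i * ξ i j) = lam i := by
    intro i
    have h : ∀ j, nu j * mu i j * (lam i / lamT i * ξ i j)
        = lam i / lamT i * (nu j * mu i j * ξ i j) := fun j => by ring
    simp only [h]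
    rw [← Finset.mul_sum, heq i, div_mul_cancel₀ _ (hT i).ne']
  have hfeas' : LPFeasible lam nu mu (fun i j => lam i / lamT i * ξ i j) 1 :=
    ⟨hrate, fun j => (Finset.sum_le_sum fun i _ => hle i j).trans (hξ1 j),
      fun i j => mul_nonneg (div_pos (hlam i) (hT i)).le (hξ0 i j)⟩
  have hρ' : 1 ≤ ρstar := hJ0 ▸ hfeas.2.1 ⟨0, hJ⟩
  obtain ⟨hstar, -⟩ := huniq _ 1 hfeas' fun ξ' ρ' h' => (hρ.antisymm hρ') ▸ hopt ξ' ρ' h'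
  have hsum : ∀ j, ∑ i, lam i / lamT i * ξ i j = 1 := fun j => by
    rw [← hone j, ← hstar]
  -- every column of `ξ` sums to at most `1`, so the shrinking changed no entry
  have hsame : ∀ i j, lam i / lamT i * ξ i j = ξ i j := fun i j =>
    (Finset.sum_eq_sum_iff_of_le fun i _ => hle i j).1
      ((Finset.sum_le_sum fun i _ => hle i j).antisymm ((hξ1 j).trans (hsum j).ge))
      i (Finset.mem_univ i)
  funext i
  rw [← heq i, ← hrate i]
  simp only [hsame]
end

section
/- (Lemma 4.) Let (Ψ̃, X̃, Ỹ, Z̃) with all components integers satisfy: Σ_{j∈𝒥} Ψ̃_{ij} = X̃_i − Ỹ_i for all i ∈ ℐ; Σ_{i∈ℐ} Ψ̃_{ij} = −Z̃_j for all j ∈ 𝒥; Ψ̃_{ij} = 0 for i ≁ j; and Ỹ_i ≥ 0, Z̃_j ≥ 0 for all i, j. Let a subset ℰ₁ ⊆ ℰ be given. Then there exist integer-valued (Ψ, X, Y, Z) satisfying the analogous relations (Σ_j Ψ_{ij} = X_i − Y_i, Σ_i Ψ_{ij} = −Z_j, Ψ_{ij} = 0 for i ≁ j, Y_i ≥ 0,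 Z_j ≥ 0) such that X = X̃, Y_i ≤ Ỹ_i for all i, Z_j ≤ Z̃_j for all j, Ψ_{ij} ≥ Ψ̃_{ij} for all i, j, and min(Y_i, Z_j) = 0 for every (i,j) ∈ ℰ₁. -/
/-!
Route greedily, one activity of `E1` at a time: at `(a, b)` raise `Ψ a b` by
`m = min (Y a) (Z b)`, which lowers `Y a` and `Z b` by `m`, keeps all balance relations, and makes
`min (Y a) (Z b) = 0`. Since `Y` and `Z` stay nonnegative and only decrease, the minima already
brought to zero remain zero, so an induction over the finite set `E1` gives the result.
-/

open Finset

/-- Lemma 4: given an integer-valued configuration `(Ψ̃, X̃, Ỹ, Z̃)`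
satisfying the balance relations and a subset `ℰ₁ ⊆ ℰ` of nonblocked activities,
there is an integer-valued configuration `(Ψ, X, Y, Z)` obtained by additional
routings only (`X = X̃`, `Y ≤ Ỹ`, `Z ≤ Z̃`, `Ψ ≥ Ψ̃`) such that `Y_i ∧ Z_j = 0` for
every `(i,j) ∈ ℰ₁`. -/
theorem stmt8 (I J : ℕ) (E E1 : Finset (Fin I × Fin J)) (hE1 : E1 ⊆ E)
    (Ψt : Fin I → Fin J → ℤ) (Xt Yt : Fin I → ℤ) (Zt : Fin J → ℤ)
    (h1 : ∀ i, ∑ j, Ψt i j = Xt i - Yt i)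
    (h2 : ∀ j, ∑ i, Ψt i j = -Zt j)
    (h3 : ∀ i j, (i, j) ∉ E → Ψt i j = 0)
    (h4 : ∀ i, 0 ≤ Yt i) (h5 : ∀ j, 0 ≤ Zt j) :
    ∃ (Ψ : Fin I → Fin J → ℤ) (X Y : Fin I → ℤ) (Z : Fin J → ℤ),
      (∀ i, ∑ j, Ψ i j = X i - Y i) ∧
      (∀ j, ∑ i, Ψ i j = -Z j) ∧
      (∀ i j, (i, j) ∉ E → Ψ i j = 0) ∧
      (∀ i, 0 ≤ Y i) ∧ (∀ j, 0 ≤ Z j) ∧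
      X = Xt ∧ (∀ i, Y i ≤ Yt i) ∧ (∀ j, Z j ≤ Zt j) ∧
      (∀ i j, Ψt i j ≤ Ψ i j) ∧
      ∀ p ∈ E1, min (Y p.1) (Z p.2) = 0 := by
  induction E1 using Finset.induction_on with
  | empty =>
    exact ⟨Ψt, Xt, Yt, Zt, h1, h2, h3, h4, h5, rfl, fun _ => le_rfl, fun _ => le_rfl,
      fun _ _ => le_rfl, by simp⟩
  | insert p s hp ih =>
    obtain ⟨a, b⟩ := p
    obtain ⟨Ψ, X, Y, Z, g1, g2, g3, g4, g5, g6, g7, g8, g9, g10⟩ :=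
      ih (fun x hx => hE1 (Finset.mem_insert_of_mem hx))
    have hab : (a, b) ∈ E := hE1 (Finset.mem_insert_self _ _)
    obtain ⟨m, hm⟩ : ∃ m, m = min (Y a) (Z b) := ⟨_, rfl⟩
    have hm0 : 0 ≤ m := hm ▸ le_min (g4 a) (g5 b)
    have hmY : m ≤ Y a := hm ▸ min_le_left _ _
    have hmZ : m ≤ Z b := hm ▸ min_le_right _ _
    have hY' : ∀ i, 0 ≤ Y i - (if i = a then m else 0) ∧
        Y i - (if i = a then m else 0) ≤ Y i := by
      intro i
      have := g4 i
      split_ifs with h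
      · subst h; omega
      · omega
    have hZ' : ∀ j, 0 ≤ Z j - (if j = b then m else 0) ∧
        Z j - (if j = b then m else 0) ≤ Z j := by
      intro j
      have := g5 j
      split_ifs with h
      · subst h; omega
      · omega
    refine ⟨fun i j => Ψ i j + if i = a then (if j = b then m else 0) else 0, X,
      fun i => Y i - if i = a then m else 0, fun j => Z j - if j = b then m else 0,
      ?_, ?_, ?_, fun i => (hY' i).1, fun j => (hZ' j).1, g6,
      fun i => (hY' i).2.trans (g7 i), fun j => (hZ' j).2.trans (g8 j), ?_, ?_⟩
    · intro i
      rw [Finset.sum_add_distrib, g1 i]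
      by_cases h : i = a <;> simp [h]
      ring
    · intro j
      rw [Finset.sum_add_distrib, g2 j]
      by_cases h : j = b <;> simp [h]
      ring
    · intro i j hij
      have h : ¬ (i = a ∧ j = b) := by
        rintro ⟨rfl, rfl⟩
        exact hij hab
      dsimp only
      rw [g3 i j hij]
      split_ifs <;> simp_all
    · intro i j
      have := g9 i j
      dsimp only
      split_ifs <;> omega
    · intro q hq
      rcases Finset.mem_insert.mp hq with rfl | hq
      · simp only [if_true]
        omega
      · have h := g10 q hq
        have hy := hY' q.1
        have hz := hZ' q.2
        dsimp only
        -- `min` is squeezed between `0` and its value before this routing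
        exact le_antisymm ((min_le_min hy.2 hz.2).trans h.le) (le_min hy.1 hz.1)
end

section
/- (Lemma 5.) There exists a constant c, depending only on I and J, with the following property. Let (ψ, x, y, z) satisfy Σ_{j∈𝒥} ψ_{ij} = x_i − y_i for all i ∈ ℐ, Σ_{i∈ℐ} ψ_{ij} = −z_j for all j ∈ 𝒥, and ψ_{ij} = 0 for i ≁ j; let (ψ̌, x̌, y̌, ž) satisfy the analogous relations. Assume y_i ≥ 0 and z_j ≥ 0 for all i, j; assume that for every (i,j) with i ∼ j and ψ_{ij} < ψ̌_{ij} one has min(y_i, z_j) = 0; and assume y̌_i ≥ 0 for all i ∈ ℐ and ž_j ≥ 0 for all j ∈ 𝒥. Then Σ_{i,j} |ψ_{ij} − ψ̌_{ij}| ≤ c · Σ_{i,j} (ψ_{ij} − ψ̌_{ij})⁺ + c · ‖x − x̌‖. -/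
/-!
Put `d = ψ - ψ̌`. Every entry satisfies `|d i j| ≤ ∑ d⁺ + ‖x - x̌‖`, so `c = I * J` works.
Only an entry with `d i j < 0` needs an argument. It lies on an activity, so `y i = 0` or `z j = 0`.
If `y i = 0`, the `i`-th row of `d` sums to `x i - x̌ i + y̌ i ≥ -|x i - x̌ i|`; if `z j = 0`, the
`j`-th column sums to `ž j ≥ 0`. A lower bound on a sum bounds each of its negative parts by the
sum of its positive parts (`neg_le_sum_pos_part`).
-/

theorem neg_le_sum_pos_part {ι : Type*} [Fintype ι] (f : ι → ℝ) (a : ℝ)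
    (h : -a ≤ ∑ k, f k) (k : ι) : -f k ≤ ∑ l, max (f l) 0 + a := by
  have h1 : max (f k) 0 - f k ≤ ∑ l, (max (f l) 0 - f l) :=
    Finset.single_le_sum (f := fun l => max (f l) 0 - f l)
      (fun l _ => sub_nonneg.2 (le_max_left _ _)) (Finset.mem_univ k)
  rw [Finset.sum_sub_distrib] at h1
  linarith [le_max_right (f k) 0]

open Finset

/-- Lemma 5: there is a constant `c`, depending only on `I` and `J`,
such that for any activity set `ℰ` and any two configurations `(ψ, x, y, z)` and
`(ψ̌, x̌, y̌, ž)` satisfying the balance relations, with `y, z, y̌, ž ≥ 0` and with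
`y_i ∧ z_j = 0` whenever `i ∼ j` and `ψ_{ij} < ψ̌_{ij}`, one has
`Σ_{ij} |ψ_{ij} − ψ̌_{ij}| ≤ c Σ_{ij} (ψ_{ij} − ψ̌_{ij})⁺ + c ‖x − x̌‖`. -/
theorem stmt9 (I J : ℕ) (hI : 0 < I) (hJ : 0 < J) :
    ∃ c : ℝ, ∀ (E : Finset (Fin I × Fin J))
      (ψ ψc : Fin I → Fin J → ℝ) (x xc y yc : Fin I → ℝ) (z zc : Fin J → ℝ),
      (∀ i, ∑ j, ψ i j = x i - y i) →
      (∀ j, ∑ i, ψ i j = -z j) →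
      (∀ i j, (i, j) ∉ E → ψ i j = 0) →
      (∀ i, ∑ j, ψc i j = xc i - yc i) →
      (∀ j, ∑ i, ψc i j = -zc j) →
      (∀ i j, (i, j) ∉ E → ψc i j = 0) →
      (∀ i, 0 ≤ y i) → (∀ j, 0 ≤ z j) →
      (∀ i j, (i, j) ∈ E → ψ i j < ψc i j → min (y i) (z j) = 0) →
      (∀ i, 0 ≤ yc i) → (∀ j, 0 ≤ zc j) →
      ∑ i, ∑ j, |ψ i j - ψc i j| ≤
        c * (∑ i, ∑ j, max (ψ i j - ψc i j) 0) + c * ∑ i, |x i - xc i| := by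
  refine ⟨(I : ℝ) * J, ?_⟩
  intro E ψ ψc x xc y yc z zc hr hc hE hrc hcc hEc hy hz hmin hyc hzc
  set P : ℝ := ∑ i, ∑ j, max (ψ i j - ψc i j) 0 with hP
  set X : ℝ := ∑ i, |x i - xc i| with hX
  have hrow : ∀ i, ∑ j, max (ψ i j - ψc i j) 0 ≤ P := fun i =>
    Finset.single_le_sum (f := fun i => ∑ j, max (ψ i j - ψc i j) 0)
      (fun i _ => Finset.sum_nonneg fun j _ => le_max_right _ _) (Finset.mem_univ i)
  have hcol : ∀ j, ∑ i, max (ψ i j - ψc i j) 0 ≤ P := fun j =>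
    Finset.sum_le_sum fun i _ =>
      Finset.single_le_sum (f := fun j => max (ψ i j - ψc i j) 0)
        (fun j _ => le_max_right _ _) (Finset.mem_univ j)
  have hent : ∀ i j, max (ψ i j - ψc i j) 0 ≤ ∑ j, max (ψ i j - ψc i j) 0 := fun i j =>
    Finset.single_le_sum (f := fun j => max (ψ i j - ψc i j) 0)
      (fun j _ => le_max_right _ _) (Finset.mem_univ j)
  have hxX : ∀ i, |x i - xc i| ≤ X := fun i =>
    Finset.single_le_sum (f := fun i => |x i - xc i|)
      (fun i _ => abs_nonneg _) (Finset.mem_univ i)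
  have hX0 : 0 ≤ X := Finset.sum_nonneg fun i _ => abs_nonneg _
  have key : ∀ i j, |ψ i j - ψc i j| ≤ P + X := by
    intro i j
    rcases le_or_gt 0 (ψ i j - ψc i j) with hd | hd
    · rw [abs_of_nonneg hd]
      linarith [hrow i, hent i j, le_max_left (ψ i j - ψc i j) 0]
    · rw [abs_of_neg hd]
      have hij : (i, j) ∈ E := by
        by_contra hn
        rw [hE i j hn, hEc i j hn] at hd
        simp at hd
      have hm := hmin i j hij (by linarith)
      rcases min_choice (y i) (z j) with h | h
      · rw [h] at hm
        have hs : -|x i - xc i| ≤ ∑ j, (ψ i j - ψc i j) := by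
          rw [Finset.sum_sub_distrib, hr, hrc, hm]
          linarith [neg_abs_le (x i - xc i), hyc i]
        linarith [neg_le_sum_pos_part _ _ hs j, hrow i, hxX i]
      · rw [h] at hm
        have hs : -0 ≤ ∑ i, (ψ i j - ψc i j) := by
          rw [Finset.sum_sub_distrib, hc, hcc, hm]
          linarith [hzc j]
        linarith [neg_le_sum_pos_part _ _ hs i, hcol j]
  calc ∑ i, ∑ j, |ψ i j - ψc i j| ≤ ∑ _i : Fin I, ∑ _j : Fin J, (P + X) :=
        Finset.sum_le_sum fun i _ => Finset.sum_le_sum fun j _ => key i j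
    _ = (I : ℝ) * J * P + (I : ℝ) * J * X := by
        simp only [Finset.sum_const, Finset.card_univ, Fintype.card_fin, nsmul_eq_mul]
        ring
end

section
/- (Lipschitz near-optimal selector, from the proof of Theorem 2(iv).) Let φ : ℝ^I × 𝕌 → ℝ be continuous, and suppose that for every x ∈ ℝ^I the map U ↦ φ(x,U) is convex on 𝕌. Then for every k > 0 and every δ > 0 there exists a Lipschitz function h : ℝ^I → 𝕌 such that φ(x, h(x)) ≤ inf_{U∈𝕌} φ(x,U) + δ for every x in the closed ball B(0,k) ⊂ ℝ^I. -/
/-!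
The `δ`-optimal controls at `x` form a convex set, and a minimizer at `x` remains `δ`-optimal near
`x`, because the value function `x ↦ inf φ(x, ·)` is continuous (`𝕌` is compact). Gluing these
locally constant selections with a smooth partition of unity gives a `C¹` selection `g` on all of
`ℝ^I`. To make it globally Lipschitz, it is interpolated with a fixed control `U₀` through a bump
function `χ` equal to `1` on the ball: `U₀ + χ (g - U₀)` has values in the convex set `𝕌`, agrees
with `g` on the ball, and differs from a constant by a compactly supported `C¹` function.
-/

open Finset

/-- The control set `𝕌`: pairs of probability vectors over classes and stations. -/
def USet (I J : ℕ) : Set ((Fin I → ℝ) × (Fin J → ℝ)) :=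
  {p | (∀ i, 0 ≤ p.1 i) ∧ (∀ j, 0 ≤ p.2 j) ∧ (∑ i, p.1 i = 1) ∧ ∑ j, p.2 j = 1}

open scoped Topology Manifold ContDiff

theorem USet_eq_prod (I J : ℕ) :
    USet I J = stdSimplex ℝ (Fin I) ×ˢ stdSimplex ℝ (Fin J) := by
  ext p
  simp only [USet, stdSimplex, Set.mem_prod, Set.mem_ofPred_eq]
  tauto

theorem isCompact_USet (I J : ℕ) : IsCompact (USet I J) := by
  rw [USet_eq_prod]
  exact (isCompact_stdSimplex ℝ _).prod (isCompact_stdSimplex ℝ _)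

theorem USet_nonempty {I J : ℕ} (hI : 0 < I) (hJ : 0 < J) : (USet I J).Nonempty := by
  rw [USet_eq_prod]
  exact ⟨(Pi.single ⟨0, hI⟩ 1, Pi.single ⟨0, hJ⟩ 1),
    single_mem_stdSimplex ℝ _, single_mem_stdSimplex ℝ _⟩

/-- Lipschitz near-optimal selector: if `φ : ℝ^I × 𝕌 → ℝ` is continuous
and convex in the control variable on `𝕌`, then for every `k > 0`, `δ > 0` there is a
Lipschitz function `h : ℝ^I → 𝕌` with `φ(x, h(x)) ≤ inf_{U ∈ 𝕌} φ(x, U) + δ` for all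
`x` in the closed Euclidean ball `B(0, k)`. -/
theorem stmt14 (I J : ℕ) (hI : 0 < I) (hJ : 0 < J)
    (φ : EuclideanSpace ℝ (Fin I) → (Fin I → ℝ) × (Fin J → ℝ) → ℝ)
    (hcont : Continuous fun p : EuclideanSpace ℝ (Fin I) × ((Fin I → ℝ) × (Fin J → ℝ)) =>
      φ p.1 p.2)
    (hconv : ∀ x, ConvexOn ℝ (USet I J) (φ x))
    (k δ : ℝ) (hk : 0 < k) (hδ : 0 < δ) :
    ∃ (h : EuclideanSpace ℝ (Fin I) → (Fin I → ℝ) × (Fin J → ℝ)) (L : NNReal),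
      LipschitzWith L h ∧ (∀ x, h x ∈ USet I J) ∧
      ∀ x ∈ Metric.closedBall (0 : EuclideanSpace ℝ (Fin I)) k,
        φ x (h x) ≤ sInf (φ x '' USet I J) + δ := by
  have hU := isCompact_USet I J
  have hne := USet_nonempty hI hJ
  have hm : Continuous fun x => sInf (φ x '' USet I J) := hU.continuous_sInf hcont
  have hφ : ∀ U, Continuous fun x => φ x U := fun U =>
    hcont.comp (continuous_id.prodMk continuous_const)
  -- A minimizer at `x` stays within `δ` of the infimum at all nearby points, since both
  -- `φ · U` and the infimum are continuous.
  have hloc : ∀ x, ∃ U, ∀ᶠ y in 𝓝 x,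
      U ∈ {V ∈ USet I J | φ y V ≤ sInf (φ y '' USet I J) + δ} := by
    intro x
    obtain ⟨U, hUm, hUeq⟩ := (hU.image (f := φ x)
      (hcont.comp (continuous_const.prodMk continuous_id))).sInf_mem (hne.image _)
    have hlt : φ x U < sInf (φ x '' USet I J) + δ := by linarith
    refine ⟨U, ?_⟩
    filter_upwards [(hφ U).continuousAt.eventually_lt
      (hm.add continuous_const).continuousAt hlt] with y hy
    exact ⟨hUm, hy.le⟩
  obtain ⟨g, hg⟩ := exists_contMDiffMap_forall_mem_convex_of_local_const
    𝓘(ℝ, EuclideanSpace ℝ (Fin I)) (n := 1) (fun x => (hconv x).convex_le _) hloc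
  have hgs : ContDiff ℝ 1 g := g.contMDiff.contDiff
  obtain ⟨U₀, hU₀⟩ := hne
  let χ : ContDiffBump (0 : EuclideanSpace ℝ (Fin I)) := ⟨k, k + 1, hk, by linarith⟩
  have hsupp : HasCompactSupport fun x => χ x • (g x - U₀) :=
    χ.hasCompactSupport.smul_right
  obtain ⟨L, hL⟩ := ContDiff.lipschitzWith_of_hasCompactSupport hsupp
    (χ.contDiff.smul (hgs.sub contDiff_const)) one_ne_zero
  refine ⟨fun x => U₀ + χ x • (g x - U₀), L, ?_, ?_, ?_⟩
  · simpa using (LipschitzWith.const U₀).add hL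
  · intro x
    exact (hconv x).1.add_smul_sub_mem hU₀ (hg x).1 ⟨χ.nonneg, χ.le_one⟩
  · intro x hx
    have h1 : χ x = 1 := χ.one_of_mem_closedBall hx
    simpa [h1] using (hg x).2
end
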